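/- arXiv:2208.13117 — 4 statements merged into one kernel-verified Lean document; each statement's English description precedes it below -/
import Mathlib

section
/- Let φ: Λ₁ → Λ₂ be an injective ℂ-algebra homomorphism and ψ: Ŵ₁ → Ŵ₂ a monoid homomorphism such that φ(w(a)) = ψ(w)(φ(a)) for all a ∈ Λ₁, w ∈ Ŵ₁, and let Φ: L₁#Ŵ₁ → L₂#Ŵ₂ be the induced algebra homomorphism Φ(Σ m_{f_w}∘w) = Σ m_{φ̂(f_w)}∘ψ(w). Suppose there is a ℂ-subspace U ⊆ Λ₂ such that the multiplication map φ(Λ₁) ⊗_ℂ U → Λ₂, φ(a) ⊗ u ↦ φ(a)·u, is a ℂ-linear isomorphism, and such that ψ(w)(φ(a)·u) = φ(w(a))·u for all w ∈ Ŵ₁, a ∈ Λ₁, u ∈ U. Then Φ maps the standard flag order 𝓕_{Λ₁} into the standard flag order 𝓕_{Λ₂}; that is, if X ∈ L₁#Ŵ₁ satisfies X(Λ₁) ⊆ Λ₁, then Φ(X)(Λ₂) ⊆ Λ₂. -/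
/-!
Statement 1: In the setting of the sufficient-condition theorem, if moreover there is a
ℂ-subspace `U ⊆ Λ₂` such that the multiplication map `φ(Λ₁) ⊗_ℂ U → Λ₂`, `φ(a) ⊗ u ↦ φ(a)·u`,
is a ℂ-linear isomorphism (encoded: the map `Λ₁ ⊗_ℂ U → L₂`, `a ⊗ u ↦ φ(a)·u`, is injective
with range exactly `Λ₂`; note `φ` is injective so `Λ₁ ≅ φ(Λ₁)`), and
`ψ(w)(φ(a)·u) = φ(w(a))·u` for all `w ∈ Ŵ₁`, `a ∈ Λ₁`, `u ∈ U`, then the induced algebra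
homomorphism `Φ : L₁#Ŵ₁ → L₂#Ŵ₂` maps the standard flag order `𝓕_{Λ₁}` into `𝓕_{Λ₂}`:
if `X(Λ₁) ⊆ Λ₁` then `Φ(X)(Λ₂) ⊆ Λ₂`.
-/

open scoped TensorProduct

noncomputable section

/-- `gen f w` is the ℂ-linear endomorphism `m_f ∘ w` of `L`. -/
def gen {L : Type*} [Field L] [Algebra ℂ L] (f : L) (w : L ≃ₐ[ℂ] L) : Module.End ℂ L :=
  (LinearMap.mulLeft ℂ f) ∘ₗ (w.toLinearMap)

/-- The skew monoid ring `L # W` realized inside `End_ℂ(L)`. -/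
def skew {L : Type*} [Field L] [Algebra ℂ L] (W : Submonoid (L ≃ₐ[ℂ] L)) :
    Subalgebra ℂ (Module.End ℂ L) :=
  Algebra.adjoin ℂ { X | ∃ (f : L) (w : L ≃ₐ[ℂ] L), w ∈ W ∧ X = gen f w }

lemma gen_mem_skew {L : Type*} [Field L] [Algebra ℂ L] {W : Submonoid (L ≃ₐ[ℂ] L)}
    (f : L) {w : L ≃ₐ[ℂ] L} (hw : w ∈ W) : gen f w ∈ skew W :=
  Algebra.subset_adjoin ⟨f, w, hw, rfl⟩

/-- The multiplication map `Λ₁ ⊗_ℂ U → L₂`, `a ⊗ u ↦ φ(a)·u`. -/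
def mulMap {L₁ L₂ : Type*} [Field L₁] [Algebra ℂ L₁] [Field L₂] [Algebra ℂ L₂]
    (Λ₁ : Subalgebra ℂ L₁) (U : Submodule ℂ L₂) (φ : L₁ →ₐ[ℂ] L₂) :
    (↥Λ₁ ⊗[ℂ] ↥U) →ₗ[ℂ] L₂ :=
  TensorProduct.lift
    (((LinearMap.mul ℂ L₂) ∘ₗ (φ.toLinearMap ∘ₗ Λ₁.val.toLinearMap)).compl₂ U.subtype)

lemma gen_apply {L : Type*} [Field L] [Algebra ℂ L] (f : L) (w : L ≃ₐ[ℂ] L) (x : L) :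
    gen f w x = f * w x := rfl

/-- A compatibility of `w₂` with `w₁` over `Λ₁` extends to the fraction field of `Λ₁`. -/
lemma apply_map_mul_of_isFractionRing {L₁ L₂ : Type*} [Field L₁] [Algebra ℂ L₁] [Field L₂]
    [Algebra ℂ L₂] (Λ₁ : Subalgebra ℂ L₁) [IsFractionRing Λ₁ L₁] (φ : L₁ →ₐ[ℂ] L₂)
    (w₁ : L₁ ≃ₐ[ℂ] L₁) (w₂ : L₂ ≃ₐ[ℂ] L₂) (hcompat : ∀ a ∈ Λ₁, φ (w₁ a) = w₂ (φ a)) {u : L₂}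
    (hu : ∀ a ∈ Λ₁, w₂ (φ a * u) = φ (w₁ a) * u) (a : L₁) :
    w₂ (φ a * u) = φ (w₁ a) * u := by
  obtain ⟨p, q, -, rfl⟩ := IsFractionRing.div_surjective (A := Λ₁) a
  change w₂ (φ ((p : L₁) / (q : L₁)) * u) = φ (w₁ ((p : L₁) / (q : L₁))) * u
  rw [map_div₀, map_div₀, map_div₀, div_mul_eq_mul_div, map_div₀, hu p p.2, hcompat q q.2,
    div_mul_eq_mul_div]

/-- If the generators intertwine multiplication by `u`, then so does all of the skew ring. -/
lemma map_skew_apply_mul {L₁ L₂ : Type*} [Field L₁] [Algebra ℂ L₁] [Field L₂] [Algebra ℂ L₂]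
    {W₁ : Submonoid (L₁ ≃ₐ[ℂ] L₁)} {W₂ : Submonoid (L₂ ≃ₐ[ℂ] L₂)} (φ : L₁ →ₐ[ℂ] L₂)
    (Φ : skew W₁ →ₐ[ℂ] skew W₂) {u : L₂}
    (hgen : ∀ (f : L₁) (w : L₁ ≃ₐ[ℂ] L₁) (hw : w ∈ W₁) (a : L₁),
      (Φ ⟨gen f w, gen_mem_skew f hw⟩ : Module.End ℂ L₂) (φ a * u) = φ (gen f w a) * u)
    (X : skew W₁) (a : L₁) :
    (Φ X : Module.End ℂ L₂) (φ a * u) = φ ((X : Module.End ℂ L₁) a) * u := by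
  obtain ⟨X, hX⟩ := X
  induction hX using Algebra.adjoin_induction generalizing a with
  | mem X hX =>
    obtain ⟨f, w, hw, rfl⟩ := hX
    exact hgen f w hw a
  | algebraMap r =>
    have h : Φ ⟨algebraMap ℂ _ r, (skew W₁).algebraMap_mem r⟩ = algebraMap ℂ _ r := Φ.commutes r
    change (Φ ⟨algebraMap ℂ _ r, (skew W₁).algebraMap_mem r⟩ : Module.End ℂ L₂) _ = _
    rw [h]
    simp [Module.algebraMap_end_apply]
  | add X Y hX hY ihX ihY =>
    have h : Φ ⟨X + Y, (skew W₁).add_mem hX hY⟩ = Φ ⟨X, hX⟩ + Φ ⟨Y, hY⟩ :=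
      map_add Φ (⟨X, hX⟩ : skew W₁) ⟨Y, hY⟩
    change (Φ ⟨X + Y, (skew W₁).add_mem hX hY⟩ : Module.End ℂ L₂) _ = _
    rw [h]
    simp only [Subalgebra.coe_add, LinearMap.add_apply, map_add, add_mul]
    rw [ihX, ihY]
  | mul X Y hX hY ihX ihY =>
    have h : Φ ⟨X * Y, (skew W₁).mul_mem hX hY⟩ = Φ ⟨X, hX⟩ * Φ ⟨Y, hY⟩ :=
      map_mul Φ (⟨X, hX⟩ : skew W₁) ⟨Y, hY⟩
    change (Φ ⟨X * Y, (skew W₁).mul_mem hX hY⟩ : Module.End ℂ L₂) _ = _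
    rw [h]
    simp only [Subalgebra.coe_mul, Module.End.mul_apply]
    rw [ihY, ihX]

theorem morphism_restricts_to_standard_flag_orders
    {L₁ L₂ : Type*} [Field L₁] [Algebra ℂ L₁] [Field L₂] [Algebra ℂ L₂]
    (Λ₁ : Subalgebra ℂ L₁) (Λ₂ : Subalgebra ℂ L₂)
    [IsFractionRing Λ₁ L₁] [IsFractionRing Λ₂ L₂]
    (W₁ : Submonoid (L₁ ≃ₐ[ℂ] L₁)) (W₂ : Submonoid (L₂ ≃ₐ[ℂ] L₂))
    (hW₁ : ∀ w ∈ W₁, ∀ x : L₁, x ∈ Λ₁ ↔ w x ∈ Λ₁)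
    (hW₂ : ∀ w ∈ W₂, ∀ x : L₂, x ∈ Λ₂ ↔ w x ∈ Λ₂)
    (φ : L₁ →ₐ[ℂ] L₂) (hφ : ∀ x ∈ Λ₁, φ x ∈ Λ₂)
    (ψ : W₁ →* W₂)
    (hcompat : ∀ (w : W₁) (a : L₁), a ∈ Λ₁ →
      φ ((w : L₁ ≃ₐ[ℂ] L₁) a) = ((ψ w : W₂) : L₂ ≃ₐ[ℂ] L₂) (φ a))
    -- the induced algebra homomorphism Φ
    (Φ : skew W₁ →ₐ[ℂ] skew W₂)
    (hΦ : ∀ (f : L₁) (w : L₁ ≃ₐ[ℂ] L₁) (hw : w ∈ W₁),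
      (Φ ⟨gen f w, gen_mem_skew f hw⟩ : Module.End ℂ L₂)
        = gen (φ f) ((ψ ⟨w, hw⟩ : W₂) : L₂ ≃ₐ[ℂ] L₂))
    -- the subspace U with Λ₂ ≅ φ(Λ₁) ⊗ U via multiplication
    (U : Submodule ℂ L₂) (hU : U ≤ Λ₂.toSubmodule)
    (hinj : Function.Injective (mulMap Λ₁ U φ))
    (hrange : LinearMap.range (mulMap Λ₁ U φ) = Λ₂.toSubmodule)
    -- the action of ψ(Ŵ₁) on the decomposition
    (haction : ∀ (w : W₁) (a : L₁), a ∈ Λ₁ → ∀ u ∈ U,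
      ((ψ w : W₂) : L₂ ≃ₐ[ℂ] L₂) (φ a * u) = φ ((w : L₁ ≃ₐ[ℂ] L₁) a) * u) :
    ∀ X : skew W₁, (∀ a ∈ Λ₁, (X : Module.End ℂ L₁) a ∈ Λ₁) →
      ∀ b ∈ Λ₂, (Φ X : Module.End ℂ L₂) b ∈ Λ₂ := by
  intro X hX b hb
  have key (a : L₁) (u : L₂) (hu : u ∈ U) :
      (Φ X : Module.End ℂ L₂) (φ a * u) = φ ((X : Module.End ℂ L₁) a) * u := by
    refine map_skew_apply_mul φ Φ (fun f w hw a => ?_) X a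
    rw [hΦ f w hw, gen_apply, gen_apply, map_mul φ, mul_assoc,
      apply_map_mul_of_isFractionRing Λ₁ φ w _ (hcompat ⟨w, hw⟩)
        (fun a ha => haction ⟨w, hw⟩ a ha u hu)]
  rw [← Subalgebra.mem_toSubmodule, ← hrange] at hb
  obtain ⟨t, rfl⟩ := hb
  induction t with
  | zero => simp
  | tmul a u =>
    change (Φ X : Module.End ℂ L₂) (φ a * u) ∈ Λ₂
    rw [key a u u.2]
    exact Λ₂.mul_mem (hφ _ (hX a a.2)) (hU u.2)
  | add s t hs ht =>
    rw [map_add, map_add]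
    exact Λ₂.add_mem hs ht
end
end

section
/- Let Λ be an integral domain and commutative ℂ-algebra with L = Frac(Λ), and let Ŵ be a monoid of ℂ-algebra automorphisms of Λ. If X₁, …, Xₙ ∈ L#Ŵ are linearly independent over L (where f ∈ L acts on L#Ŵ by X ↦ m_f∘X), then there exist a₁, …, aₙ ∈ Λ such that the n×n matrix (X_i(a_j))_{i,j=1}^n over L has nonzero determinant. -/
/-!
Statement 8: If X₁, …, Xₙ ∈ L#Ŵ are linearly independent over L (with f ∈ L acting by
X ↦ m_f ∘ X), then there exist a₁, …, aₙ ∈ Λ such that det (X_i(a_j)) ≠ 0.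
-/

noncomputable section

/-- Every element of the skew monoid ring is an `L`-linear combination of automorphisms of `L`. -/
theorem mem_span_of_mem_skew {L : Type*} [Field L] [Algebra ℂ L] {W : Submonoid (L ≃ₐ[ℂ] L)}
    {X : Module.End ℂ L} (hX : X ∈ skew W) :
    X ∈ Submodule.span L
      (Set.range fun w : L ≃ₐ[ℂ] L => (w.toLinearMap : Module.End ℂ L)) := by
  induction hX using Algebra.adjoin_induction with
  | mem X hX =>
    obtain ⟨f, w, -, rfl⟩ := hX
    exact Submodule.smul_mem _ f (Submodule.subset_span ⟨w, rfl⟩)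
  | algebraMap r =>
    have h : algebraMap ℂ (Module.End ℂ L) r =
        algebraMap ℂ L r • (AlgEquiv.refl : L ≃ₐ[ℂ] L).toLinearMap := by
      ext x
      simp [Algebra.smul_def]
    rw [h]
    exact Submodule.smul_mem _ _ (Submodule.subset_span ⟨AlgEquiv.refl, rfl⟩)
  | add X Y _ _ hX hY => exact add_mem hX hY
  | mul X Y hXadj hYadj hX hY =>
    clear hXadj hYadj
    induction hX using Submodule.span_induction with
    | zero => simp
    | add X X' _ _ hX hX' =>
      rw [add_mul]
      exact add_mem hX hX'
    | smul f X _ hX =>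
      have h : (f • X) * Y = f • (X * Y) := rfl
      rw [h]
      exact Submodule.smul_mem _ f hX
    | mem X hX =>
      obtain ⟨w, rfl⟩ := hX
      induction hY using Submodule.span_induction with
      | zero => simp
      | add Y Y' _ _ hY hY' =>
        rw [mul_add]
        exact add_mem hY hY'
      | smul g Y _ hY =>
        have h : (w.toLinearMap : Module.End ℂ L) * (g • Y) =
            w g • ((w.toLinearMap : Module.End ℂ L) * Y) := by
          ext x
          simp
        dsimp only
        rw [h]
        exact Submodule.smul_mem _ _ hY
      | mem Y hY =>
        obtain ⟨v, rfl⟩ := hY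
        exact Submodule.subset_span ⟨w * v, rfl⟩

/-- By independence of characters, an `L`-linear combination of automorphisms of `L` that vanishes
on a subalgebra with fraction field `L` is zero. -/
theorem eq_zero_of_mem_span_of_forall_mem {L : Type*} [Field L] [Algebra ℂ L]
    (Λ : Subalgebra ℂ L) [IsFractionRing Λ L] {X : Module.End ℂ L}
    (hX : X ∈ Submodule.span L
      (Set.range fun w : L ≃ₐ[ℂ] L => (w.toLinearMap : Module.End ℂ L)))
    (h : ∀ a ∈ Λ, X a = 0) : X = 0 := by
  obtain ⟨c, rfl⟩ := Finsupp.mem_span_range_iff_exists_finsupp.mp hX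
  let res : (L ≃ₐ[ℂ] L) → (Λ →* L) := fun w => ((w : L →* L).comp (Λ.val : Λ →* L))
  have hres : Function.Injective res := by
    intro w v hwv
    have key : (w : L →+* L) = (v : L →+* L) :=
      IsLocalization.ringHom_ext (nonZeroDivisors Λ)
        (RingHom.ext fun a => DFunLike.congr_fun hwv a)
    exact AlgEquiv.ext fun x => DFunLike.congr_fun key x
  have hli := (linearIndependent_monoidHom Λ L).comp res hres
  have hc : c = 0 := by
    refine linearIndependent_iff.mp hli c (funext fun a => ?_)
    have ha := h a a.2
    simpa [Finsupp.linearCombination_apply, Finsupp.sum, res] using ha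
  simp [hc]

/-- Functions `x₁, …, xₙ : S → K` that are linearly independent over a field `K` have a nonvanishing
generalized Vandermonde determinant `det (xᵢ(aⱼ))`. -/
theorem exists_det_ne_zero_of_linearIndependent {K S : Type*} [Field K] {n : ℕ}
    {x : Fin n → S → K} (hx : LinearIndependent K x) :
    ∃ a : Fin n → S, (Matrix.of fun i j => x i (a j)).det ≠ 0 := by
  have hspan : Submodule.span K (Set.range fun (s : S) (i : Fin n) => x i s) = ⊤ := by
    by_contra hne
    obtain ⟨φ, hφ, hle⟩ := Submodule.exists_le_ker_of_lt_top _ (lt_top_iff_ne_top.mpr hne)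
    refine hφ (LinearMap.pi_ext' fun i => LinearMap.ext_ring ?_)
    refine Fintype.linearIndependent_iff.mp hx (fun i => φ (Pi.single i 1)) (funext fun s => ?_) i
    have hs : φ (fun i => x i s) = 0 := hle (Submodule.subset_span ⟨s, rfl⟩)
    rw [LinearMap.pi_apply_eq_sum_univ] at hs
    have hsingle (i : Fin n) : (Pi.single i 1 : Fin n → K) = fun j => if i = j then 1 else 0 := by
      ext j
      simp [Pi.single_apply, eq_comm]
    simpa [mul_comm, hsingle] using hs
  obtain ⟨f, hf, -, hli⟩ := Submodule.exists_fun_fin_finrank_span_eq K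
    (Set.range fun (s : S) (i : Fin n) => x i s)
  have hn : n = Module.finrank K
      (Submodule.span K (Set.range fun (s : S) (i : Fin n) => x i s)) := by
    rw [hspan, finrank_top, Module.finrank_fin_fun]
  choose a ha using hf
  refine ⟨fun j => a (Fin.cast hn j), ?_⟩
  have hcols : LinearIndependent K (Matrix.of fun i j => x i (a (Fin.cast hn j))).col := by
    have hcol : (Matrix.of fun i j => x i (a (Fin.cast hn j))).col = f ∘ Fin.cast hn :=
      funext fun j => ha (Fin.cast hn j)
    rw [hcol]
    exact hli.comp _ (Fin.cast_injective hn)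
  exact ((Matrix.isUnit_iff_isUnit_det _).mp
    (Matrix.linearIndependent_cols_iff_isUnit.mp hcols)).ne_zero

theorem nonzero_determinant
    {L : Type*} [Field L] [Algebra ℂ L]
    (Λ : Subalgebra ℂ L) [IsFractionRing Λ L]
    (W : Submonoid (L ≃ₐ[ℂ] L))
    (hW : ∀ w ∈ W, ∀ x : L, x ∈ Λ ↔ w x ∈ Λ)
    (n : ℕ) (X : Fin n → Module.End ℂ L)
    (hXmem : ∀ i, X i ∈ skew W)
    -- linear independence over L, where f ∈ L acts by X ↦ m_f ∘ X
    (hindep : ∀ c : Fin n → L,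
      (∑ i, (LinearMap.mulLeft ℂ (c i)) ∘ₗ (X i)) = 0 → ∀ i, c i = 0) :
    ∃ a : Fin n → L, (∀ j, a j ∈ Λ) ∧
      (Matrix.of fun i j => (X i) (a j)).det ≠ 0 := by
  have hli : LinearIndependent L fun (i : Fin n) (a : Λ) => X i a := by
    refine Fintype.linearIndependent_iff.mpr fun c hc => hindep c ?_
    refine eq_zero_of_mem_span_of_forall_mem Λ
      (sum_mem fun i _ => Submodule.smul_mem _ (c i) (mem_span_of_mem_skew (hXmem i)))
      fun a ha => ?_
    simpa using congrFun hc ⟨a, ha⟩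
  obtain ⟨a, ha⟩ := exists_det_ne_zero_of_linearIndependent hli
  exact ⟨fun j => a j, fun j => (a j).2, ha⟩
end
end

section
/- For i = 1,2 let Λᵢ be an integral domain and commutative ℂ-algebra with Lᵢ = Frac(Λᵢ), and Ŵᵢ a group of ℂ-algebra automorphisms of Λᵢ. Assume Λ = Λ₁ ⊗_ℂ Λ₂ is an integral domain with L = Frac(Λ), Ŵ = Ŵ₁ × Ŵ₂ acting componentwise, and ι: L₁ ⊗_ℂ L₂ → L the canonical injection. If X = Σ_{i=1}^k m_{f_i}∘(w_{i1}, w_{i2}) ∈ L#Ŵ lies in the standard flag order 𝓕_Λ, then there exist nonzero d₁ ∈ Λ₁ and d₂ ∈ Λ₂ such that every coefficient f_i lies in ι((1/d₁)Λ₁ ⊗_ℂ (1/d₂)Λ₂); in particular every element of 𝓕_Λ lies in the image of the embedding ψ: (L₁#Ŵ₁) ⊗_ℂ (L₂#Ŵ₂) → L#Ŵ, so 𝓕_Λ ⊆ ψ({Y ∈ (L₁#Ŵ₁) ⊗_ℂ (L₂#Ŵ₂) : ψ(Y)(Λ) ⊆ Λ}). -/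
/-!
Statement 11: In the tensor-product setting, if X = Σᵢ m_{fᵢ} ∘ (w_{i1}, w_{i2}) ∈ L#Ŵ lies
in the standard flag order 𝓕_Λ (Λ = Λ₁ ⊗_ℂ Λ₂ realized inside L = Frac(Λ)), then there are
nonzero d₁ ∈ Λ₁, d₂ ∈ Λ₂ with every fᵢ ∈ ι((1/d₁)Λ₁ ⊗ (1/d₂)Λ₂), i.e.
ι₁(d₁)·ι₂(d₂)·fᵢ ∈ Λ; in particular X lies in the image of the canonical embedding
ψ : (L₁#Ŵ₁) ⊗_ℂ (L₂#Ŵ₂) → L#Ŵ.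
-/

set_option synthInstance.maxHeartbeats 1000000
set_option maxHeartbeats 1000000

open scoped TensorProduct

noncomputable section

/-- `Λ = Λ₁ ⊗ Λ₂`, realized inside `L` as the subalgebra generated by `ι₁(Λ₁) ∪ ι₂(Λ₂)`. -/
def tensorSub {L₁ L₂ L : Type*} [Field L₁] [Algebra ℂ L₁] [Field L₂] [Algebra ℂ L₂]
    [Field L] [Algebra ℂ L] (Λ₁ : Subalgebra ℂ L₁) (Λ₂ : Subalgebra ℂ L₂)
    (ι₁ : L₁ →ₐ[ℂ] L) (ι₂ : L₂ →ₐ[ℂ] L) : Subalgebra ℂ L :=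
  Algebra.adjoin ℂ ((ι₁ '' (Λ₁ : Set L₁)) ∪ (ι₂ '' (Λ₂ : Set L₂)))

/-- An automorphism of a fraction field is determined by its values on the subring. -/
lemma exists_mem_apply_ne_of_ne {K : Type*} [Field K] [Algebra ℂ K] (A : Subalgebra ℂ K)
    [IsFractionRing A K] {u v : K ≃ₐ[ℂ] K} (h : u ≠ v) : ∃ x ∈ A, u x ≠ v x := by
  by_contra! hc
  refine h (AlgEquiv.ext fun y => ?_)
  obtain ⟨a, b, -, rfl⟩ := IsFractionRing.div_surjective (A := A) y
  rw [map_div₀, map_div₀]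
  exact congrArg₂ (· / ·) (hc a a.2) (hc b b.2)

/-- If `∑ i, F i • σ i` preserves a subalgebra `A`, then so does the operator with coefficients
`F i * (σ i x - y)`, for `x, y ∈ A`. -/
lemma sum_mul_sub_mul_apply_mem {L ι : Type*} [Field L] [Algebra ℂ L] [Fintype ι]
    (A : Subalgebra ℂ L) (σ : ι → L ≃ₐ[ℂ] L) {F : ι → L}
    (hF : ∀ a ∈ A, ∑ i, F i * σ i a ∈ A) {x y : L} (hx : x ∈ A) (hy : y ∈ A) :
    ∀ a ∈ A, ∑ i, F i * (σ i x - y) * σ i a ∈ A := by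
  intro a ha
  have h : ∑ i, F i * (σ i x - y) * σ i a
      = ∑ i, F i * σ i (x * a) - y * ∑ i, F i * σ i a := by
    rw [Finset.mul_sum, ← Finset.sum_sub_distrib]
    refine Finset.sum_congr rfl fun i _ => ?_
    rw [map_mul]
    ring
  rw [h]
  exact A.sub_mem (hF _ (A.mul_mem hx ha)) (A.mul_mem hy (hF a ha))

section tensorSub

variable {L₁ L₂ L : Type*} [Field L₁] [Algebra ℂ L₁] [Field L₂] [Algebra ℂ L₂]
  [Field L] [Algebra ℂ L] {Λ₁ : Subalgebra ℂ L₁} {Λ₂ : Subalgebra ℂ L₂}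
  {ι₁ : L₁ →ₐ[ℂ] L} {ι₂ : L₂ →ₐ[ℂ] L}

lemma left_mem_tensorSub {x : L₁} (hx : x ∈ Λ₁) : ι₁ x ∈ tensorSub Λ₁ Λ₂ ι₁ ι₂ :=
  Algebra.subset_adjoin (Or.inl ⟨x, hx, rfl⟩)

lemma right_mem_tensorSub {x : L₂} (hx : x ∈ Λ₂) : ι₂ x ∈ tensorSub Λ₁ Λ₂ ι₁ ι₂ :=
  Algebra.subset_adjoin (Or.inr ⟨x, hx, rfl⟩)

lemma tensorSub_le_range_productMap :
    tensorSub Λ₁ Λ₂ ι₁ ι₂ ≤ (Algebra.TensorProduct.productMap ι₁ ι₂).range := by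
  refine Algebra.adjoin_le ?_
  rintro _ (⟨x, -, rfl⟩ | ⟨x, -, rfl⟩)
  · exact ⟨x ⊗ₜ 1, by simp⟩
  · exact ⟨1 ⊗ₜ x, by simp⟩

/-- A coefficient with a denominator `ι₁ d₁ * ι₂ d₂` comes from `L₁ ⊗ L₂`. -/
lemma mem_range_productMap_of_mul_mem {d₁ : L₁} {d₂ : L₂} (h₁ : d₁ ≠ 0) (h₂ : d₂ ≠ 0) {g : L}
    (h : ι₁ d₁ * ι₂ d₂ * g ∈ tensorSub Λ₁ Λ₂ ι₁ ι₂) :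
    g ∈ (Algebra.TensorProduct.productMap ι₁ ι₂).range := by
  have hinv : ι₁ d₁⁻¹ * ι₂ d₂⁻¹ ∈ (Algebra.TensorProduct.productMap ι₁ ι₂).range :=
    ⟨d₁⁻¹ ⊗ₜ d₂⁻¹, by simp⟩
  have h₁' : ι₁ d₁ ≠ 0 := (map_ne_zero ι₁).2 h₁
  have h₂' : ι₂ d₂ ≠ 0 := (map_ne_zero ι₂).2 h₂
  have hg : g = ι₁ d₁⁻¹ * ι₂ d₂⁻¹ * (ι₁ d₁ * ι₂ d₂ * g) := by
    rw [map_inv₀, map_inv₀]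
    field_simp
  rw [hg]
  exact mul_mem hinv (tensorSub_le_range_productMap h)

/-- The coefficients away from `i₀` can be annihilated one at a time, at the cost of multiplying the
coefficient at `i₀` by a product of nonzero elements of `Λ₁` and `Λ₂`. -/
lemma exists_annihilating_coefficients [IsFractionRing Λ₁ L₁] [IsFractionRing Λ₂ L₂]
    {ι : Type*} [Fintype ι]
    (f : ι → L) (w : ι → (L₁ ≃ₐ[ℂ] L₁) × (L₂ ≃ₐ[ℂ] L₂)) (hw : Function.Injective w)
    (hw₁ : ∀ i, ∀ x ∈ Λ₁, (w i).1 x ∈ Λ₁) (hw₂ : ∀ i, ∀ x ∈ Λ₂, (w i).2 x ∈ Λ₂)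
    (σ : ι → L ≃ₐ[ℂ] L) (hσ₁ : ∀ i x, σ i (ι₁ x) = ι₁ ((w i).1 x))
    (hσ₂ : ∀ i x, σ i (ι₂ x) = ι₂ ((w i).2 x))
    (hf : ∀ a ∈ tensorSub Λ₁ Λ₂ ι₁ ι₂, ∑ i, f i * σ i a ∈ tensorSub Λ₁ Λ₂ ι₁ ι₂)
    (i₀ : ι) (S : Finset ι) (hS : i₀ ∉ S) :
    ∃ d₁ ∈ Λ₁, d₁ ≠ 0 ∧ ∃ d₂ ∈ Λ₂, d₂ ≠ 0 ∧ ∃ F : ι → L,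
      (∀ a ∈ tensorSub Λ₁ Λ₂ ι₁ ι₂, ∑ i, F i * σ i a ∈ tensorSub Λ₁ Λ₂ ι₁ ι₂) ∧
      F i₀ = ι₁ d₁ * ι₂ d₂ * f i₀ ∧ ∀ j ∈ S, F j = 0 := by
  classical
  induction S using Finset.induction_on with
  | empty => exact ⟨1, Λ₁.one_mem, one_ne_zero, 1, Λ₂.one_mem, one_ne_zero, f, hf, by simp⟩
  | insert j S _ ih =>
    rw [Finset.mem_insert, not_or] at hS
    obtain ⟨d₁, hd₁, hd₁0, d₂, hd₂, hd₂0, F, hF, hF₀, hFS⟩ := ih hS.2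
    by_cases h : (w i₀).1 = (w j).1
    · have h' : (w i₀).2 ≠ (w j).2 := fun h' => hS.1 (hw (Prod.ext h h'))
      obtain ⟨x, hx, hne⟩ := exists_mem_apply_ne_of_ne Λ₂ h'
      refine ⟨d₁, hd₁, hd₁0, d₂ * ((w i₀).2 x - (w j).2 x),
        Λ₂.mul_mem hd₂ (Λ₂.sub_mem (hw₂ _ x hx) (hw₂ _ x hx)),
        mul_ne_zero hd₂0 (sub_ne_zero.2 hne), fun i => F i * (σ i (ι₂ x) - ι₂ ((w j).2 x)),
        sum_mul_sub_mul_apply_mem _ σ hF (right_mem_tensorSub hx)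
          (right_mem_tensorSub (hw₂ j x hx)), ?_, ?_⟩
      · simp only [hF₀, hσ₂, map_mul, map_sub]
        ring
      · intro l hl
        rcases Finset.mem_insert.1 hl with rfl | hl
        · simp [hσ₂]
        · simp [hFS l hl]
    · obtain ⟨x, hx, hne⟩ := exists_mem_apply_ne_of_ne Λ₁ h
      refine ⟨d₁ * ((w i₀).1 x - (w j).1 x),
        Λ₁.mul_mem hd₁ (Λ₁.sub_mem (hw₁ _ x hx) (hw₁ _ x hx)),
        mul_ne_zero hd₁0 (sub_ne_zero.2 hne), d₂, hd₂, hd₂0,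
        fun i => F i * (σ i (ι₁ x) - ι₁ ((w j).1 x)),
        sum_mul_sub_mul_apply_mem _ σ hF (left_mem_tensorSub hx)
          (left_mem_tensorSub (hw₁ j x hx)), ?_, ?_⟩
      · simp only [hF₀, hσ₁, map_mul, map_sub]
        ring
      · intro l hl
        rcases Finset.mem_insert.1 hl with rfl | hl
        · simp [hσ₁]
        · simp [hFS l hl]

/-- Finitely many elements with denominators of the form `ι₁ d₁ * ι₂ d₂` have a common one. -/
lemma exists_common_denominator {ι : Type*} [Fintype ι] (f : ι → L)
    (h : ∀ i, ∃ d₁ ∈ Λ₁, d₁ ≠ 0 ∧ ∃ d₂ ∈ Λ₂, d₂ ≠ 0 ∧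
      ι₁ d₁ * ι₂ d₂ * f i ∈ tensorSub Λ₁ Λ₂ ι₁ ι₂) :
    ∃ d₁ ∈ Λ₁, d₁ ≠ 0 ∧ ∃ d₂ ∈ Λ₂, d₂ ≠ 0 ∧
      ∀ i, ι₁ d₁ * ι₂ d₂ * f i ∈ tensorSub Λ₁ Λ₂ ι₁ ι₂ := by
  classical
  choose d hd hd0 e he he0 hf using h
  refine ⟨∏ i, d i, prod_mem fun i _ => hd i, Finset.prod_ne_zero_iff.2 fun i _ => hd0 i,
    ∏ i, e i, prod_mem fun i _ => he i, Finset.prod_ne_zero_iff.2 fun i _ => he0 i, fun i => ?_⟩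
  rw [← Finset.mul_prod_erase _ d (Finset.mem_univ i),
    ← Finset.mul_prod_erase _ e (Finset.mem_univ i), map_mul, map_mul]
  have hsplit : ∀ a b c u v : L, a * u * (b * v) * c = u * v * (a * b * c) := by
    intros
    ring
  rw [hsplit]
  exact mul_mem (mul_mem (left_mem_tensorSub (prod_mem fun j _ => hd j))
    (right_mem_tensorSub (prod_mem fun j _ => he j))) (hf i)

end tensorSub

theorem flag_elements_have_bounded_denominators
    {L₁ L₂ L : Type*} [Field L₁] [Algebra ℂ L₁] [Field L₂] [Algebra ℂ L₂]
    [Field L] [Algebra ℂ L]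
    (Λ₁ : Subalgebra ℂ L₁) (Λ₂ : Subalgebra ℂ L₂)
    [IsFractionRing Λ₁ L₁] [IsFractionRing Λ₂ L₂]
    (W₁ : Subgroup (L₁ ≃ₐ[ℂ] L₁)) (W₂ : Subgroup (L₂ ≃ₐ[ℂ] L₂))
    (hW₁ : ∀ w ∈ W₁, ∀ x : L₁, x ∈ Λ₁ ↔ w x ∈ Λ₁)
    (hW₂ : ∀ w ∈ W₂, ∀ x : L₂, x ∈ Λ₂ ↔ w x ∈ Λ₂)
    (ι₁ : L₁ →ₐ[ℂ] L) (ι₂ : L₂ →ₐ[ℂ] L)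
    (hι : Function.Injective (Algebra.TensorProduct.productMap ι₁ ι₂))
    (hfrac : ∀ x : L, ∃ a ∈ tensorSub Λ₁ Λ₂ ι₁ ι₂, ∃ b ∈ tensorSub Λ₁ Λ₂ ι₁ ι₂,
      b ≠ 0 ∧ x = a / b)
    (ext : ((L₁ ≃ₐ[ℂ] L₁) × (L₂ ≃ₐ[ℂ] L₂)) →* (L ≃ₐ[ℂ] L))
    (hext : ∀ (p : (L₁ ≃ₐ[ℂ] L₁) × (L₂ ≃ₐ[ℂ] L₂)) (f : L₁) (g : L₂),
      ext p (ι₁ f * ι₂ g) = ι₁ (p.1 f) * ι₂ (p.2 g))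
    -- X = Σᵢ m_{fᵢ} ∘ (w_{i1}, w_{i2}), with distinct (w_{i1}, w_{i2}) ∈ Ŵ₁ × Ŵ₂
    (k : ℕ) (f : Fin k → L) (w : Fin k → (L₁ ≃ₐ[ℂ] L₁) × (L₂ ≃ₐ[ℂ] L₂))
    (hwmem : ∀ i, (w i).1 ∈ W₁ ∧ (w i).2 ∈ W₂)
    (hwinj : Function.Injective w)
    -- X lies in the standard flag order 𝓕_Λ
    (hXflag : ∀ a ∈ tensorSub Λ₁ Λ₂ ι₁ ι₂,
      (∑ i, gen (f i) (ext (w i))) a ∈ tensorSub Λ₁ Λ₂ ι₁ ι₂) :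
    -- the coefficients have bounded denominators:
    (∃ d₁ ∈ Λ₁, d₁ ≠ 0 ∧ ∃ d₂ ∈ Λ₂, d₂ ≠ 0 ∧
      ∀ i, ι₁ d₁ * ι₂ d₂ * f i ∈ tensorSub Λ₁ Λ₂ ι₁ ι₂) ∧
    -- in particular, X lies in the image of any embedding ψ determined by the canonical formula
    (∀ ψ : (↥(skew W₁.toSubmonoid) ⊗[ℂ] ↥(skew W₂.toSubmonoid)) →ₐ[ℂ] Module.End ℂ L,
      (∀ (a : L₁) (b : L₂) (w₁ : L₁ ≃ₐ[ℂ] L₁) (w₂ : L₂ ≃ₐ[ℂ] L₂)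
          (h₁ : w₁ ∈ W₁) (h₂ : w₂ ∈ W₂),
        ψ (⟨gen a w₁, gen_mem_skew a h₁⟩ ⊗ₜ[ℂ] ⟨gen b w₂, gen_mem_skew b h₂⟩)
          = gen (ι₁ a * ι₂ b) (ext (w₁, w₂))) →
      ∃ t, ψ t = ∑ i, gen (f i) (ext (w i))) := by
  have hσ₁ : ∀ i x, ext (w i) (ι₁ x) = ι₁ ((w i).1 x) := fun i x => by
    simpa using hext (w i) x 1
  have hσ₂ : ∀ i x, ext (w i) (ι₂ x) = ι₂ ((w i).2 x) := fun i x => by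
    simpa using hext (w i) 1 x
  have hflag : ∀ a ∈ tensorSub Λ₁ Λ₂ ι₁ ι₂,
      ∑ i, f i * ext (w i) a ∈ tensorSub Λ₁ Λ₂ ι₁ ι₂ := fun a ha => by
    simpa [gen, LinearMap.sum_apply] using hXflag a ha
  have hden := exists_common_denominator (Λ₁ := Λ₁) (Λ₂ := Λ₂) (ι₁ := ι₁) (ι₂ := ι₂) f
    fun i₀ => by
      obtain ⟨d₁, hd₁, hd₁0, d₂, hd₂, hd₂0, F, hF, hF₀, hF0⟩ :=
        exists_annihilating_coefficients f w hwinj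
          (fun i x hx => (hW₁ _ (hwmem i).1 x).1 hx) (fun i x hx => (hW₂ _ (hwmem i).2 x).1 hx)
          (fun i => ext (w i)) hσ₁ hσ₂ hflag i₀ (Finset.univ.erase i₀) (Finset.notMem_erase _ _)
      refine ⟨d₁, hd₁, hd₁0, d₂, hd₂, hd₂0, ?_⟩
      have h1 := hF 1 (one_mem _)
      rw [Finset.sum_eq_single i₀
        (fun j _ hj => by simp [hF0 j (Finset.mem_erase.2 ⟨hj, Finset.mem_univ j⟩)])
        (fun h => absurd (Finset.mem_univ i₀) h), map_one, mul_one, hF₀] at h1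
      exact h1
  refine ⟨hden, fun ψ hψ => ?_⟩
  obtain ⟨d₁, -, hd₁0, d₂, -, hd₂0, hd⟩ := hden
  suffices h : ∑ i, gen (f i) (ext (w i)) ∈ ψ.range from h
  refine sum_mem fun i _ => ?_
  obtain ⟨t, ht⟩ := mem_range_productMap_of_mul_mem hd₁0 hd₂0 (hd i)
  rw [← ht]
  clear ht
  induction t using TensorProduct.induction_on with
  | zero =>
    convert zero_mem ψ.range
    ext
    simp [gen]
  | tmul a b =>
    exact ⟨_, (hψ a b (w i).1 (w i).2 (hwmem i).1 (hwmem i).2).trans (by simp)⟩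
  | add s t hs ht =>
    convert add_mem hs ht
    ext
    simp [gen, add_mul]
end
end

section
/- For i = 1,2 let (Λᵢ, Wᵢ, 𝓜ᵢ) be flag order data: Λᵢ a Noetherian integral domain and commutative ℂ-algebra, Wᵢ a finite group of ℂ-algebra automorphisms of Λᵢ, 𝓜ᵢ a submonoid of automorphisms of Λᵢ with wμw⁻¹ ∈ 𝓜ᵢ for all w ∈ Wᵢ, μ ∈ 𝓜ᵢ, and Ŵᵢ the submonoid of Aut(Λᵢ) consisting of the products w·μ (w ∈ Wᵢ, μ ∈ 𝓜ᵢ). Let Fᵢ ⊆ Lᵢ#Ŵᵢ be a principal flag order with data (Λᵢ, Wᵢ, 𝓜ᵢ). Assume Λ = Λ₁ ⊗_ℂ Λ₂ is an integral domain, and let ψ: (L₁#Ŵ₁) ⊗_ℂ (L₂#Ŵ₂) → L#Ŵ be the canonical embedding, where Ŵ = Ŵ₁ × Ŵ₂ acts componentwise. Then ψ(F₁ ⊗_ℂ F₂) is a principal flag order with data (Λ₁⊗_ℂΛ₂, W₁×W₂, 𝓜₁×𝓜₂): it contains Λ#(W₁×W₂), its left L-span equals L#Ŵ, and every element X of it satisfies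 X(Λ) ⊆ Λ. -/
/-!
Statement 13: Given two sets of flag order data (Λᵢ, Wᵢ, 𝓜ᵢ) (Λᵢ Noetherian domains,
Wᵢ finite groups of automorphisms, 𝓜ᵢ Wᵢ-invariant submonoids of automorphisms,
Ŵᵢ = ⟨Wᵢ, 𝓜ᵢ⟩) and principal flag orders Fᵢ ⊆ Lᵢ#Ŵᵢ, the image ψ(F₁ ⊗_ℂ F₂) under the
canonical embedding ψ is a principal flag order with data (Λ₁⊗_ℂΛ₂, W₁×W₂, 𝓜₁×𝓜₂):
it is a subalgebra containing Λ#(W₁×W₂), its left L-span is L#Ŵ, and each of its elements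
preserves Λ = Λ₁⊗Λ₂.
-/

set_option synthInstance.maxHeartbeats 1000000
set_option maxHeartbeats 4000000

open scoped TensorProduct

noncomputable section

/-- The submonoid `Ŵ = ⟨W, 𝓜⟩` generated by `W` and `𝓜`. -/
def genMon {L₀ : Type*} [Field L₀] [Algebra ℂ L₀] (W : Subgroup (L₀ ≃ₐ[ℂ] L₀))
    (M : Submonoid (L₀ ≃ₐ[ℂ] L₀)) : Submonoid (L₀ ≃ₐ[ℂ] L₀) :=
  Submonoid.closure ((W : Set (L₀ ≃ₐ[ℂ] L₀)) ∪ (M : Set (L₀ ≃ₐ[ℂ] L₀)))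

/-- The span of pure tensors `X₁ ⊗ X₂` with `Xᵢ ∈ Fᵢ`, inside `(L₁#Ŵ₁) ⊗ (L₂#Ŵ₂)`;
this realizes `F₁ ⊗_ℂ F₂`. -/
def pureSpan {L₁ L₂ : Type*} [Field L₁] [Algebra ℂ L₁] [Field L₂] [Algebra ℂ L₂]
    (W₁' : Submonoid (L₁ ≃ₐ[ℂ] L₁)) (W₂' : Submonoid (L₂ ≃ₐ[ℂ] L₂))
    (F₁ : Set (Module.End ℂ L₁)) (F₂ : Set (Module.End ℂ L₂)) :
    Submodule ℂ (↥(skew W₁') ⊗[ℂ] ↥(skew W₂')) :=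
  Submodule.span ℂ {t | ∃ (X₁ : skew W₁') (X₂ : skew W₂'),
    ((X₁ : Module.End ℂ L₁) ∈ F₁) ∧ ((X₂ : Module.End ℂ L₂) ∈ F₂) ∧ t = X₁ ⊗ₜ[ℂ] X₂}

lemma gen_mul_gen {L : Type*} [Field L] [Algebra ℂ L] (f g : L) (w v : L ≃ₐ[ℂ] L) :
    gen f w * gen g v = gen (f * w g) (w * v) := by
  ext x
  simp [gen_apply, mul_assoc]

lemma gen_one_one {L : Type*} [Field L] [Algebra ℂ L] :
    gen (1 : L) (1 : L ≃ₐ[ℂ] L) = 1 := by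
  ext x
  simp [gen_apply]

lemma mulLeft_comp_eq_gen_mul {L : Type*} [Field L] [Algebra ℂ L] (f : L)
    (Y : Module.End ℂ L) :
    (LinearMap.mulLeft ℂ f) ∘ₗ Y = gen f 1 * Y := rfl

/-- `gen f w` as a linear map in `f`. -/
def genLinear {L : Type*} [Field L] [Algebra ℂ L] (w : L ≃ₐ[ℂ] L) :
    L →ₗ[ℂ] Module.End ℂ L where
  toFun f := gen f w
  map_add' f g := by ext x; simp [gen_apply, add_mul]
  map_smul' c f := by ext x; simp [gen_apply]

/-- The skew monoid ring is spanned by the elements `gen f w`. -/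
lemma skew_toSubmodule_eq_span {L : Type*} [Field L] [Algebra ℂ L]
    (W : Submonoid (L ≃ₐ[ℂ] L)) :
    Subalgebra.toSubmodule (skew W) =
      Submodule.span ℂ { X | ∃ (f : L) (w : L ≃ₐ[ℂ] L), w ∈ W ∧ X = gen f w } := by
  let S : Submonoid (Module.End ℂ L) :=
    { carrier := { X | ∃ (f : L) (w : L ≃ₐ[ℂ] L), w ∈ W ∧ X = gen f w }
      one_mem' := ⟨1, 1, W.one_mem, gen_one_one.symm⟩
      mul_mem' := by
        rintro _ _ ⟨f, w, hw, rfl⟩ ⟨g, v, hv, rfl⟩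
        exact ⟨f * w g, w * v, W.mul_mem hw hv, gen_mul_gen f g w v⟩ }
  rw [skew, Algebra.adjoin_eq_span]
  exact congrArg (fun T : Submonoid (Module.End ℂ L) => Submodule.span ℂ (T : Set (Module.End ℂ L)))
    (Submonoid.closure_eq S)

/-- A spanning set of a subalgebra, viewed inside the subalgebra, spans it. -/
lemma span_coe_mem_eq_top {E : Type*} [Ring E] [Algebra ℂ E] {A : Subalgebra ℂ E} {s : Set E}
    (hs : Submodule.span ℂ s = Subalgebra.toSubmodule A) :
    Submodule.span ℂ {X : A | (X : E) ∈ s} = ⊤ := by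
  apply Submodule.map_injective_of_injective (f := A.val.toLinearMap) Subtype.val_injective
  rw [Submodule.map_span, Submodule.map_top]
  have hsub : s ⊆ A := fun x hx => by
    have : x ∈ Submodule.span ℂ s := Submodule.subset_span hx
    rwa [hs] at this
  have himg : A.val.toLinearMap '' {X : A | (X : E) ∈ s} = s := by
    ext x
    constructor
    · rintro ⟨y, hy, rfl⟩
      exact hy
    · exact fun hx => ⟨⟨x, hsub hx⟩, hx, rfl⟩
  rw [himg, hs]
  ext x
  simp

/-- A submodule containing the images of all `X₁ ⊗ X₂`, for `Xᵢ` in spanning sets of subalgebras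
`Aᵢ`, contains the image of the whole tensor product. -/
lemma map_tensor_mem_of_span {E₁ E₂ V : Type*} [Ring E₁] [Algebra ℂ E₁] [Ring E₂] [Algebra ℂ E₂]
    [AddCommGroup V] [Module ℂ V] {A₁ : Subalgebra ℂ E₁} {A₂ : Subalgebra ℂ E₂}
    {s₁ : Set E₁} {s₂ : Set E₂}
    (h₁ : Submodule.span ℂ s₁ = Subalgebra.toSubmodule A₁)
    (h₂ : Submodule.span ℂ s₂ = Subalgebra.toSubmodule A₂)
    (φ : (A₁ ⊗[ℂ] A₂) →ₗ[ℂ] V) (N : Submodule ℂ V)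
    (h : ∀ (X₁ : A₁) (X₂ : A₂), (X₁ : E₁) ∈ s₁ → (X₂ : E₂) ∈ s₂ → φ (X₁ ⊗ₜ X₂) ∈ N)
    (t : A₁ ⊗[ℂ] A₂) : φ t ∈ N := by
  induction t with
  | zero => simp
  | add x y hx hy => rw [map_add]; exact N.add_mem hx hy
  | tmul X₁ X₂ =>
    have hX₁ : X₁ ∈ Submodule.span ℂ {X : A₁ | (X : E₁) ∈ s₁} := by
      rw [span_coe_mem_eq_top h₁]; trivial
    have hX₂ : X₂ ∈ Submodule.span ℂ {X : A₂ | (X : E₂) ∈ s₂} := by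
      rw [span_coe_mem_eq_top h₂]; trivial
    have key := Submodule.apply_mem_map₂ (TensorProduct.mk ℂ A₁ A₂) hX₁ hX₂
    rw [Submodule.map₂_span_span] at key
    refine (Submodule.span_le (p := N.comap φ)).2 ?_ key
    rintro _ ⟨x, hx, y, hy, rfl⟩
    exact h x y hx hy

/-- `Λ₁ ⊗ Λ₂` inside `L` is spanned by the products `ι₁ a * ι₂ b`. -/
lemma tensorSub_toSubmodule_eq_span {L₁ L₂ L : Type*} [Field L₁] [Algebra ℂ L₁] [Field L₂]
    [Algebra ℂ L₂] [Field L] [Algebra ℂ L] (Λ₁ : Subalgebra ℂ L₁) (Λ₂ : Subalgebra ℂ L₂)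
    (ι₁ : L₁ →ₐ[ℂ] L) (ι₂ : L₂ →ₐ[ℂ] L) :
    Subalgebra.toSubmodule (tensorSub Λ₁ Λ₂ ι₁ ι₂) =
      Submodule.span ℂ {x | ∃ a ∈ Λ₁, ∃ b ∈ Λ₂, x = ι₁ a * ι₂ b} := by
  let S : Submonoid L :=
    { carrier := {x | ∃ a ∈ Λ₁, ∃ b ∈ Λ₂, x = ι₁ a * ι₂ b}
      one_mem' := ⟨1, Λ₁.one_mem, 1, Λ₂.one_mem, by simp⟩
      mul_mem' := by
        rintro _ _ ⟨a, ha, b, hb, rfl⟩ ⟨c, hc, d, hd, rfl⟩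
        exact ⟨a * c, Λ₁.mul_mem ha hc, b * d, Λ₂.mul_mem hb hd, by
          rw [map_mul, map_mul, mul_mul_mul_comm]⟩ }
  apply le_antisymm
  · rw [tensorSub, Algebra.adjoin_eq_span]
    refine Submodule.span_mono ((Submonoid.closure_le (S := S)).2 ?_)
    rintro _ (⟨a, ha, rfl⟩ | ⟨b, hb, rfl⟩)
    · exact ⟨a, ha, 1, Λ₂.one_mem, by simp⟩
    · exact ⟨1, Λ₁.one_mem, b, hb, by simp⟩
  · rw [Submodule.span_le]
    rintro _ ⟨a, ha, b, hb, rfl⟩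
    exact (tensorSub Λ₁ Λ₂ ι₁ ι₂).mul_mem
      (Algebra.subset_adjoin (Or.inl ⟨a, ha, rfl⟩)) (Algebra.subset_adjoin (Or.inr ⟨b, hb, rfl⟩))

lemma pureSpan_mul_mem {L₁ L₂ : Type*} [Field L₁] [Algebra ℂ L₁] [Field L₂] [Algebra ℂ L₂]
    {V₁ : Submonoid (L₁ ≃ₐ[ℂ] L₁)} {V₂ : Submonoid (L₂ ≃ₐ[ℂ] L₂)}
    (F₁ : Subalgebra ℂ (Module.End ℂ L₁)) (F₂ : Subalgebra ℂ (Module.End ℂ L₂))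
    {s t : ↥(skew V₁) ⊗[ℂ] ↥(skew V₂)}
    (hs : s ∈ pureSpan V₁ V₂ (F₁ : Set (Module.End ℂ L₁)) (F₂ : Set (Module.End ℂ L₂)))
    (ht : t ∈ pureSpan V₁ V₂ (F₁ : Set (Module.End ℂ L₁)) (F₂ : Set (Module.End ℂ L₂))) :
    s * t ∈ pureSpan V₁ V₂ (F₁ : Set (Module.End ℂ L₁)) (F₂ : Set (Module.End ℂ L₂)) := by
  have h := Submodule.mul_mem_mul hs ht
  rw [pureSpan, Submodule.span_mul_span] at h
  refine Submodule.span_mono ?_ h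
  rintro _ ⟨_, ⟨X₁, X₂, hX₁, hX₂, rfl⟩, _, ⟨Y₁, Y₂, hY₁, hY₂, rfl⟩, rfl⟩
  exact ⟨X₁ * Y₁, X₂ * Y₂, F₁.mul_mem hX₁ hY₁, F₂.mul_mem hX₂ hY₂,
    Algebra.TensorProduct.tmul_mul_tmul X₁ Y₁ X₂ Y₂⟩

theorem principal_flag_orders_closed_under_tensor
    {L₁ L₂ L : Type*} [Field L₁] [Algebra ℂ L₁] [Field L₂] [Algebra ℂ L₂]
    [Field L] [Algebra ℂ L]
    (Λ₁ : Subalgebra ℂ L₁) (Λ₂ : Subalgebra ℂ L₂)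
    [IsFractionRing Λ₁ L₁] [IsFractionRing Λ₂ L₂]
    -- Λᵢ Noetherian
    (hnoeth₁ : IsNoetherianRing Λ₁) (hnoeth₂ : IsNoetherianRing Λ₂)
    -- the finite groups Wᵢ of automorphisms
    (W₁ : Subgroup (L₁ ≃ₐ[ℂ] L₁)) (W₂ : Subgroup (L₂ ≃ₐ[ℂ] L₂))
    (hW₁fin : (W₁ : Set (L₁ ≃ₐ[ℂ] L₁)).Finite) (hW₂fin : (W₂ : Set (L₂ ≃ₐ[ℂ] L₂)).Finite)
    (hW₁ : ∀ w ∈ W₁, ∀ x : L₁, x ∈ Λ₁ ↔ w x ∈ Λ₁)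
    (hW₂ : ∀ w ∈ W₂, ∀ x : L₂, x ∈ Λ₂ ↔ w x ∈ Λ₂)
    -- the monoids 𝓜ᵢ of automorphisms, invariant under conjugation by Wᵢ
    (M₁ : Submonoid (L₁ ≃ₐ[ℂ] L₁)) (M₂ : Submonoid (L₂ ≃ₐ[ℂ] L₂))
    (hM₁ : ∀ μ ∈ M₁, ∀ x : L₁, x ∈ Λ₁ ↔ μ x ∈ Λ₁)
    (hM₂ : ∀ μ ∈ M₂, ∀ x : L₂, x ∈ Λ₂ ↔ μ x ∈ Λ₂)
    (hinv₁ : ∀ w ∈ W₁, ∀ μ ∈ M₁, w * μ * w⁻¹ ∈ M₁)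
    (hinv₂ : ∀ w ∈ W₂, ∀ μ ∈ M₂, w * μ * w⁻¹ ∈ M₂)
    -- F₁ and F₂ are principal flag orders with data (Λᵢ, Wᵢ, 𝓜ᵢ)
    (F₁ : Subalgebra ℂ (Module.End ℂ L₁)) (F₂ : Subalgebra ℂ (Module.End ℂ L₂))
    (hF₁skew : F₁ ≤ skew (genMon W₁ M₁))
    (hF₂skew : F₂ ≤ skew (genMon W₂ M₂))
    (hF₁i : ∀ f ∈ Λ₁, ∀ w ∈ W₁, gen f w ∈ F₁)
    (hF₂i : ∀ f ∈ Λ₂, ∀ w ∈ W₂, gen f w ∈ F₂)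
    (hF₁ii : Submodule.span ℂ
        {Z : Module.End ℂ L₁ | ∃ (f : L₁) (Y : Module.End ℂ L₁), Y ∈ F₁ ∧
          Z = (LinearMap.mulLeft ℂ f) ∘ₗ Y} =
      Subalgebra.toSubmodule
        (skew (genMon W₁ M₁)))
    (hF₂ii : Submodule.span ℂ
        {Z : Module.End ℂ L₂ | ∃ (f : L₂) (Y : Module.End ℂ L₂), Y ∈ F₂ ∧
          Z = (LinearMap.mulLeft ℂ f) ∘ₗ Y} =
      Subalgebra.toSubmodule
        (skew (genMon W₂ M₂)))
    (hF₁iii : ∀ X ∈ F₁, ∀ a ∈ Λ₁, X a ∈ Λ₁)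
    (hF₂iii : ∀ X ∈ F₂, ∀ a ∈ Λ₂, X a ∈ Λ₂)
    -- the canonical realization of Λ₁ ⊗ Λ₂ inside L = Frac(Λ₁ ⊗ Λ₂)
    (ι₁ : L₁ →ₐ[ℂ] L) (ι₂ : L₂ →ₐ[ℂ] L)
    (hι : Function.Injective (Algebra.TensorProduct.productMap ι₁ ι₂))
    (hfrac : ∀ x : L, ∃ a ∈ tensorSub Λ₁ Λ₂ ι₁ ι₂, ∃ b ∈ tensorSub Λ₁ Λ₂ ι₁ ι₂,
      b ≠ 0 ∧ x = a / b)
    (ext : ((L₁ ≃ₐ[ℂ] L₁) × (L₂ ≃ₐ[ℂ] L₂)) →* (L ≃ₐ[ℂ] L))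
    (hext : ∀ (p : (L₁ ≃ₐ[ℂ] L₁) × (L₂ ≃ₐ[ℂ] L₂)) (f : L₁) (g : L₂),
      ext p (ι₁ f * ι₂ g) = ι₁ (p.1 f) * ι₂ (p.2 g))
    -- the canonical embedding ψ
    (ψ : (↥(skew (genMon W₁ M₁)) ⊗[ℂ]
          ↥(skew (genMon W₂ M₂)))
        →ₐ[ℂ] Module.End ℂ L)
    (hψ : ∀ (a : L₁) (b : L₂) (w₁ : L₁ ≃ₐ[ℂ] L₁) (w₂ : L₂ ≃ₐ[ℂ] L₂)
        (h₁ : w₁ ∈ genMon W₁ M₁)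
        (h₂ : w₂ ∈ genMon W₂ M₂),
      ψ (⟨gen a w₁, gen_mem_skew a h₁⟩ ⊗ₜ[ℂ] ⟨gen b w₂, gen_mem_skew b h₂⟩)
        = gen (ι₁ a * ι₂ b) (ext (w₁, w₂))) :
    -- ψ(F₁ ⊗ F₂) is a principal flag order with data (Λ₁⊗Λ₂, W₁×W₂, 𝓜₁×𝓜₂):
    -- it is a unital subalgebra ...
    ((1 : Module.End ℂ L) ∈ Submodule.map ψ.toLinearMap (pureSpan (genMon W₁ M₁) (genMon W₂ M₂) ↑F₁ ↑F₂)) ∧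
    (∀ Y ∈ Submodule.map ψ.toLinearMap (pureSpan (genMon W₁ M₁) (genMon W₂ M₂) ↑F₁ ↑F₂),
      ∀ Z ∈ Submodule.map ψ.toLinearMap (pureSpan (genMon W₁ M₁) (genMon W₂ M₂) ↑F₁ ↑F₂),
        Y * Z ∈ Submodule.map ψ.toLinearMap (pureSpan (genMon W₁ M₁) (genMon W₂ M₂) ↑F₁ ↑F₂)) ∧
    -- ... containing Λ#(W₁×W₂) ...
    (∀ f ∈ tensorSub Λ₁ Λ₂ ι₁ ι₂, ∀ w₁ ∈ W₁, ∀ w₂ ∈ W₂,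
      gen f (ext (w₁, w₂)) ∈ Submodule.map ψ.toLinearMap (pureSpan (genMon W₁ M₁) (genMon W₂ M₂) ↑F₁ ↑F₂)) ∧
    -- ... whose left L-span is all of L#(Ŵ₁×Ŵ₂) ...
    (Submodule.span ℂ
        {Z : Module.End ℂ L | ∃ (f : L) (Y : Module.End ℂ L),
          Y ∈ Submodule.map ψ.toLinearMap (pureSpan (genMon W₁ M₁) (genMon W₂ M₂) ↑F₁ ↑F₂) ∧
          Z = (LinearMap.mulLeft ℂ f) ∘ₗ Y} =
      Subalgebra.toSubmodule (skew (Submonoid.map ext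
        ((genMon W₁ M₁).prod
          (genMon W₂ M₂))))) ∧
    -- ... and all of whose elements preserve Λ = Λ₁ ⊗ Λ₂:
    (∀ Z ∈ Submodule.map ψ.toLinearMap (pureSpan (genMon W₁ M₁) (genMon W₂ M₂) ↑F₁ ↑F₂),
      ∀ a ∈ tensorSub Λ₁ Λ₂ ι₁ ι₂, Z a ∈ tensorSub Λ₁ Λ₂ ι₁ ι₂) := by
  have hmem : ∀ (X₁ : skew (genMon W₁ M₁)) (X₂ : skew (genMon W₂ M₂)),
      (X₁ : Module.End ℂ L₁) ∈ F₁ → (X₂ : Module.End ℂ L₂) ∈ F₂ →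
      ψ (X₁ ⊗ₜ X₂) ∈ Submodule.map ψ.toLinearMap
        (pureSpan (genMon W₁ M₁) (genMon W₂ M₂) ↑F₁ ↑F₂) := fun X₁ X₂ h₁ h₂ =>
    Submodule.mem_map_of_mem (Submodule.subset_span ⟨X₁, X₂, h₁, h₂, rfl⟩)
  have hψspan : ∀ t, ψ t ∈ Subalgebra.toSubmodule (skew (Submonoid.map ext
      ((genMon W₁ M₁).prod (genMon W₂ M₂)))) := by
    refine map_tensor_mem_of_span (skew_toSubmodule_eq_span _).symm
      (skew_toSubmodule_eq_span _).symm ψ.toLinearMap _ ?_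
    rintro ⟨_, _⟩ ⟨_, _⟩ ⟨f, w, hw, rfl⟩ ⟨g, v, hv, rfl⟩
    rw [AlgHom.toLinearMap_apply, hψ f g w v hw hv]
    exact gen_mem_skew _ ⟨(w, v), ⟨hw, hv⟩, rfl⟩
  have hψapply : ∀ (X₁ : skew (genMon W₁ M₁)) (X₂ : skew (genMon W₂ M₂)) (x : L₁) (y : L₂),
      ψ (X₁ ⊗ₜ X₂) (ι₁ x * ι₂ y) =
        ι₁ ((X₁ : Module.End ℂ L₁) x) * ι₂ ((X₂ : Module.End ℂ L₂) y) := by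
    intro X₁ X₂ x y
    let ev₁ : skew (genMon W₁ M₁) →ₗ[ℂ] L :=
      ι₁.toLinearMap ∘ₗ LinearMap.applyₗ x ∘ₗ (skew (genMon W₁ M₁)).val.toLinearMap
    let ev₂ : skew (genMon W₂ M₂) →ₗ[ℂ] L :=
      ι₂.toLinearMap ∘ₗ LinearMap.applyₗ y ∘ₗ (skew (genMon W₂ M₂)).val.toLinearMap
    have h := map_tensor_mem_of_span (skew_toSubmodule_eq_span (genMon W₁ M₁)).symm
      (skew_toSubmodule_eq_span (genMon W₂ M₂)).symm
      (LinearMap.applyₗ (ι₁ x * ι₂ y) ∘ₗ ψ.toLinearMap -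
        LinearMap.mul' ℂ L ∘ₗ TensorProduct.map ev₁ ev₂) ⊥ (by
      rintro ⟨_, _⟩ ⟨_, _⟩ ⟨f, w, hw, rfl⟩ ⟨g, v, hv, rfl⟩
      have e := congrArg (fun Z : Module.End ℂ L => Z (ι₁ x * ι₂ y)) (hψ f g w v hw hv)
      simp only [gen_apply, hext] at e
      simp only [Submodule.mem_bot, LinearMap.sub_apply, sub_eq_zero, LinearMap.comp_apply,
        TensorProduct.map_tmul, LinearMap.mul'_apply, AlgHom.toLinearMap_apply,
        LinearMap.applyₗ_apply_apply, ev₁, ev₂, Subalgebra.coe_val, gen_apply, map_mul]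
      rw [e, mul_mul_mul_comm]) (X₁ ⊗ₜ X₂)
    simpa [sub_eq_zero, ev₁, ev₂] using h
  refine ⟨?_, ?_, ?_, ?_, ?_⟩
  · rw [← map_one ψ]
    exact hmem 1 1 F₁.one_mem F₂.one_mem
  · rintro _ ⟨s, hs, rfl⟩ _ ⟨t, ht, rfl⟩
    exact ⟨s * t, pureSpan_mul_mem F₁ F₂ hs ht, map_mul ψ s t⟩
  · intro f hf w₁ hw₁ w₂ hw₂
    rw [← Subalgebra.mem_toSubmodule, tensorSub_toSubmodule_eq_span] at hf
    refine (Submodule.span_le (p := Submodule.comap (genLinear (ext (w₁, w₂)))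
      (Submodule.map ψ.toLinearMap
        (pureSpan (genMon W₁ M₁) (genMon W₂ M₂) ↑F₁ ↑F₂)))).2 ?_ hf
    rintro _ ⟨a, ha, b, hb, rfl⟩
    have h₁ : w₁ ∈ genMon W₁ M₁ := Submonoid.subset_closure (Or.inl hw₁)
    have h₂ : w₂ ∈ genMon W₂ M₂ := Submonoid.subset_closure (Or.inl hw₂)
    have h := hmem ⟨gen a w₁, gen_mem_skew a h₁⟩ ⟨gen b w₂, gen_mem_skew b h₂⟩
      (hF₁i a ha w₁ hw₁) (hF₂i b hb w₂ hw₂)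
    rw [hψ a b w₁ w₂ h₁ h₂] at h
    exact h
  · apply le_antisymm
    · rw [Submodule.span_le]
      rintro _ ⟨f, _, ⟨t, -, rfl⟩, rfl⟩
      rw [mulLeft_comp_eq_gen_mul]
      exact Subalgebra.mul_mem _ (gen_mem_skew f (Submonoid.one_mem _)) (hψspan t)
    · rw [skew_toSubmodule_eq_span, Submodule.span_le]
      rintro _ ⟨f, _, ⟨⟨w₁, w₂⟩, ⟨h₁, h₂⟩, rfl⟩, rfl⟩
      have h := map_tensor_mem_of_span hF₁ii hF₂ii
        (LinearMap.mulLeft ℂ (gen f 1) ∘ₗ ψ.toLinearMap)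
        (Submodule.span ℂ {Z : Module.End ℂ L | ∃ (f : L) (Y : Module.End ℂ L),
          Y ∈ Submodule.map ψ.toLinearMap
            (pureSpan (genMon W₁ M₁) (genMon W₂ M₂) ↑F₁ ↑F₂) ∧
          Z = (LinearMap.mulLeft ℂ f) ∘ₗ Y}) (by
        rintro ⟨_, _⟩ ⟨_, _⟩ ⟨a, Y₁, hY₁, rfl⟩ ⟨b, Y₂, hY₂, rfl⟩
        apply Submodule.subset_span
        refine ⟨f * (ι₁ a * ι₂ b), _,
          hmem ⟨Y₁, hF₁skew hY₁⟩ ⟨Y₂, hF₂skew hY₂⟩ hY₁ hY₂, ?_⟩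
        have e := hψ a b 1 1 (Submonoid.one_mem _) (Submonoid.one_mem _)
        rw [← Prod.one_eq_mk, map_one] at e
        have e' : gen (f * (ι₁ a * ι₂ b)) (1 : L ≃ₐ[ℂ] L) =
            gen f 1 * gen (ι₁ a * ι₂ b) 1 := by
          rw [gen_mul_gen, mul_one, AlgEquiv.one_apply]
        rw [mulLeft_comp_eq_gen_mul (f * (ι₁ a * ι₂ b)), e', ← e, mul_assoc, ← map_mul,
          Algebra.TensorProduct.tmul_mul_tmul]
        rfl)
        (⟨gen 1 w₁, gen_mem_skew 1 h₁⟩ ⊗ₜ ⟨gen 1 w₂, gen_mem_skew 1 h₂⟩)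
      rw [LinearMap.comp_apply, AlgHom.toLinearMap_apply, hψ 1 1 w₁ w₂ h₁ h₂,
        LinearMap.mulLeft_apply, gen_mul_gen] at h
      simpa using h
  · rintro _ ⟨t, ht, rfl⟩ z hz
    rw [← Subalgebra.mem_toSubmodule, tensorSub_toSubmodule_eq_span] at hz
    refine (Submodule.span_le (p := Submodule.comap (ψ t)
      (Subalgebra.toSubmodule (tensorSub Λ₁ Λ₂ ι₁ ι₂)))).2 ?_ hz
    rintro _ ⟨a, ha, b, hb, rfl⟩
    refine (Submodule.span_le (p := Submodule.comap
      (LinearMap.applyₗ (ι₁ a * ι₂ b) ∘ₗ ψ.toLinearMap)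
      (Subalgebra.toSubmodule (tensorSub Λ₁ Λ₂ ι₁ ι₂)))).2 ?_ ht
    rintro _ ⟨X₁, X₂, hX₁, hX₂, rfl⟩
    have h : ψ (X₁ ⊗ₜ X₂) (ι₁ a * ι₂ b) ∈
        Subalgebra.toSubmodule (tensorSub Λ₁ Λ₂ ι₁ ι₂) := by
      rw [hψapply, tensorSub_toSubmodule_eq_span]
      exact Submodule.subset_span ⟨_, hF₁iii _ hX₁ a ha, _, hF₂iii _ hX₂ b hb, rfl⟩
    exact h
end
end
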